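/- Let G~ be a mixed bicyclic graph whose underlying graph is θ(p,l,q) with p even and l, q odd. Then r(G~) = 2m(G) − 2κ(G) + 1 if and only if the two odd cycles of G~ have even signatures and the even cycle C~_{q+l−2} of G~ satisfies q + l + σ(C~_{q+l−2}) ≡ 2 (mod 4). -/

import Mathlib

open scoped Classical

namespace MixedPaper

universe u

/-- A mixed graph: a finite simple graph together with an orientation of a subset
of its edges.  `arc u v = true` means there is an arc from `u` to `v`. -/
structure MixedGraph (V : Type u) where
  graph : SimpleGraph V
  arc : V → V → Bool
  arc_adj : ∀ u v, arc u v → graph.Adj u v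
  arc_antisymm : ∀ u v, arc u v → ¬ arc v u

variable {V : Type u}

/-- The Hermitian adjacency matrix of a mixed graph. -/
noncomputable def MixedGraph.hMatrix [Fintype V] [DecidableEq V] (M : MixedGraph V) :
    Matrix V V ℂ := fun u v =>
  if M.arc u v then Complex.I
  else if M.arc v u then -Complex.I
  else if M.graph.Adj u v then 1 else 0

/-- The H-rank of a mixed graph: the rank of its Hermitian adjacency matrix. -/
noncomputable def MixedGraph.hRank [Fintype V] [DecidableEq V] (M : MixedGraph V) : ℕ :=
  M.hMatrix.rank

/-- The matching number of a simple graph. -/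
noncomputable def matchingNumber (G : SimpleGraph V) : ℕ :=
  sSup {k | ∃ N : G.Subgraph, N.IsMatching ∧ N.edgeSet.ncard = k}

/-- A subgraph is a cycle subgraph if it is connected and every one of its vertices
has exactly two neighbours in it. -/
def IsCycleSubgraph {G : SimpleGraph V} (C : G.Subgraph) : Prop :=
  C.Connected ∧ ∀ v ∈ C.verts, {w | C.Adj v w}.ncard = 2

/-- κ(G) : the number of even cycles of G. -/
noncomputable def evenCycleCount (G : SimpleGraph V) : ℕ :=
  {C : G.Subgraph | IsCycleSubgraph C ∧ Even C.verts.ncard}.ncard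

/-- c(G) = |E(G)| - |V(G)| + ω(G), the cyclomatic number. -/
noncomputable def cyclomatic [Fintype V] (G : SimpleGraph V) : ℤ :=
  (G.edgeSet.ncard : ℤ) - (Fintype.card V : ℤ) + (Nat.card G.ConnectedComponent : ℤ)

/-- The induced mixed subgraph on a set of vertices. -/
def MixedGraph.induce (M : MixedGraph V) (S : Set V) : MixedGraph S where
  graph := M.graph.induce S
  arc := fun a b => M.arc a.1 b.1
  arc_adj := fun a b h => M.arc_adj a.1 b.1 h
  arc_antisymm := fun a b h => M.arc_antisymm a.1 b.1 h

/-- The mixed subgraph induced by a connected component of the underlying graph. -/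
def MixedGraph.comp (M : MixedGraph V) (c : M.graph.ConnectedComponent) :
    MixedGraph c.supp := M.induce c.supp

/-- The signature |f - b| of a closed walk in a mixed graph: the absolute difference
between the numbers of forward and backward arcs along the walk. -/
def walkSignature (M : MixedGraph V) {u : V} (w : M.graph.Walk u u) : ℕ :=
  ((w.darts.countP fun d => M.arc d.toProd.1 d.toProd.2 : ℤ) -
    (w.darts.countP fun d => M.arc d.toProd.2 d.toProd.1 : ℤ)).natAbs

/-- The signature of the cycle subgraph `C` of the mixed graph `M` satisfies the
predicate `P` (expressed via a closed walk traversing `C`; the signature does not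
depend on the choice of traversal). -/
def CycleSig (M : MixedGraph V) (C : M.graph.Subgraph) (P : ℕ → Prop) : Prop :=
  ∃ (u : V) (w : M.graph.Walk u u), w.IsCycle ∧
    {v | v ∈ w.support} = C.verts ∧ {e | e ∈ w.edges} = C.edgeSet ∧
    P (walkSignature M w)

/-- `C` is a pendant cycle with unique vertex `x` of degree 3. -/
def IsPendantCycle (G : SimpleGraph V) (C : G.Subgraph) (x : V) : Prop :=
  IsCycleSubgraph C ∧ x ∈ C.verts ∧ {w | G.Adj x w}.ncard = 3 ∧
    ∀ v ∈ C.verts, v ≠ x → {w | G.Adj v w}.ncard = 2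

/-- G has no pendant vertices (vertices of degree 1). -/
def NoPendantVerts (G : SimpleGraph V) : Prop := ∀ u : V, {w | G.Adj u w}.ncard ≠ 1

/-- The (distinct) cycles of G are pairwise vertex-disjoint. -/
def CyclesVertexDisjoint (G : SimpleGraph V) : Prop :=
  ∀ C₁ C₂ : G.Subgraph, IsCycleSubgraph C₁ → IsCycleSubgraph C₂ → C₁ ≠ C₂ →
    Disjoint C₁.verts C₂.verts

/-- The (distinct) even cycles of G are pairwise vertex-disjoint. -/
def EvenCyclesVertexDisjoint (G : SimpleGraph V) : Prop :=
  ∀ C₁ C₂ : G.Subgraph, IsCycleSubgraph C₁ → IsCycleSubgraph C₂ →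
    Even C₁.verts.ncard → Even C₂.verts.ncard → C₁ ≠ C₂ →
    Disjoint C₁.verts C₂.verts

/-- One pendant `K₂` deletion step, recorded on the surviving vertex sets:
`u` is pendant in the graph induced on `S` with unique neighbour `v` there,
and both are deleted. -/
def PendantStep (G : SimpleGraph V) (S T : Set V) : Prop :=
  ∃ u v, u ∈ S ∧ v ∈ S ∧ {w | w ∈ S ∧ G.Adj u w} = {v} ∧ T = S \ {u, v}

/-- `S` is reachable from the full vertex set by a sequence of pendant K₂ deletions. -/
def PendantReaches (G : SimpleGraph V) (S : Set V) : Prop :=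
  Relation.ReflTransGen (PendantStep G) Set.univ S

/-- The graph induced on `S` has no pendant vertices. -/
def NoPendantIn (G : SimpleGraph V) (S : Set V) : Prop :=
  ∀ u ∈ S, {w | w ∈ S ∧ G.Adj u w}.ncard ≠ 1

/-- `u` lies on some even cycle of `G`. -/
def OnEvenCycle (G : SimpleGraph V) (u : V) : Prop :=
  ∃ C : G.Subgraph, IsCycleSubgraph C ∧ Even C.verts.ncard ∧ u ∈ C.verts

/-- G is the graph ∞(p,1,q): two cycles of lengths p and q sharing exactly one vertex. -/
def IsInfinityGraph (G : SimpleGraph V) (p q : ℕ) : Prop :=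
  ∃ C₁ C₂ : G.Subgraph, IsCycleSubgraph C₁ ∧ IsCycleSubgraph C₂ ∧
    C₁.verts.ncard = p ∧ C₂.verts.ncard = q ∧
    (C₁.verts ∩ C₂.verts).ncard = 1 ∧ C₁ ⊔ C₂ = ⊤

/-- G is the theta graph θ(p,l,q): three internally disjoint paths with p, l, q
vertices respectively, joining two common endvertices. -/
def IsThetaGraph (G : SimpleGraph V) (p l q : ℕ) : Prop :=
  2 ≤ p ∧ 2 ≤ l ∧ 2 ≤ q ∧ ¬(p = 2 ∧ l = 2) ∧ ¬(p = 2 ∧ q = 2) ∧ ¬(l = 2 ∧ q = 2) ∧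
  ∃ (a b : V) (W₁ W₂ W₃ : G.Walk a b), W₁.IsPath ∧ W₂.IsPath ∧ W₃.IsPath ∧
    W₁.length = p - 1 ∧ W₂.length = l - 1 ∧ W₃.length = q - 1 ∧
    (∀ v : V, v ∈ W₁.support ∨ v ∈ W₂.support ∨ v ∈ W₃.support) ∧
    (∀ e ∈ G.edgeSet, e ∈ W₁.edges ∨ e ∈ W₂.edges ∨ e ∈ W₃.edges) ∧
    {v | v ∈ W₁.support ∧ v ∈ W₂.support} = {a, b} ∧
    {v | v ∈ W₁.support ∧ v ∈ W₃.support} = {a, b} ∧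
    {v | v ∈ W₂.support ∧ v ∈ W₃.support} = {a, b}

/-- Every odd cycle of `M` has signature satisfying `P`. -/
def OddCyclesSig (M : MixedGraph V) (P : ℕ → Prop) : Prop :=
  ∀ C : M.graph.Subgraph, IsCycleSubgraph C → Odd C.verts.ncard → CycleSig M C P

/-- Every even cycle of `M`, of length `n`, has signature `s` satisfying `P n s`. -/
def EvenCyclesSig (M : MixedGraph V) (P : ℕ → ℕ → Prop) : Prop :=
  ∀ C : M.graph.Subgraph, IsCycleSubgraph C → Even C.verts.ncard →
    CycleSig M C (P C.verts.ncard)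

/-- The whole mixed graph is a single cycle. -/
def IsCycleMG (M : MixedGraph V) : Prop := IsCycleSubgraph (⊤ : M.graph.Subgraph)

/-- The family 𝔊₀. -/
def MemG0 [Fintype V] [DecidableEq V] (M : MixedGraph V) : Prop :=
  M.graph.Connected ∧ 1 ≤ cyclomatic M.graph ∧ CyclesVertexDisjoint M.graph ∧
  NoPendantVerts M.graph ∧
  ∃ (C : M.graph.Subgraph) (x : V), IsPendantCycle M.graph C x ∧ Odd C.verts.ncard ∧
    CycleSig M C Odd ∧
    ((M.induce (C.vertsᶜ ∪ {x})).hRank : ℤ) =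
      2 * (matchingNumber (M.induce (C.vertsᶜ ∪ {x})).graph : ℤ) -
        2 * cyclomatic (M.induce (C.vertsᶜ ∪ {x})).graph

/-- The family 𝔛₁ : mixed ∞(p,1,q)-graphs, p even, q odd, whose odd cycle has odd
signature and whose even cycle C̃_p satisfies σ ≡ p (mod 4). -/
def MemX1 (M : MixedGraph V) : Prop :=
  ∃ p q : ℕ, Even p ∧ Odd q ∧ IsInfinityGraph M.graph p q ∧
    OddCyclesSig M Odd ∧ EvenCyclesSig M (fun n s => s % 4 = n % 4)

/-- The family 𝔛₂ : mixed θ(p,l,q)-graphs, p even, l q odd, whose two odd cycles have odd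
signatures and whose even cycle C̃_{q+l-2} satisfies q + l + σ ≡ 2 (mod 4). -/
def MemX2 (M : MixedGraph V) : Prop :=
  ∃ p l q : ℕ, Even p ∧ Odd l ∧ Odd q ∧ IsThetaGraph M.graph p l q ∧
    OddCyclesSig M Odd ∧ EvenCyclesSig M (fun _ s => (q + l + s) % 4 = 2)

/-- The family 𝔊₂ = 𝔊₀ ∪ 𝔛₁ ∪ 𝔛₂ together with the mixed odd cycles of odd signature. -/
def MemG2 [Fintype V] [DecidableEq V] (M : MixedGraph V) : Prop :=
  MemG0 M ∨ MemX1 M ∨ MemX2 M ∨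
    (IsCycleMG M ∧ Odd (Nat.card V) ∧ CycleSig M ⊤ Odd)

/-- The family 𝔜₁. -/
def MemY1 (M : MixedGraph V) : Prop :=
  ∃ p q : ℕ, Even p ∧ Odd q ∧ IsInfinityGraph M.graph p q ∧
    OddCyclesSig M Even ∧ EvenCyclesSig M (fun n s => s % 4 = n % 4)

/-- The family 𝔜₂. -/
def MemY2 (M : MixedGraph V) : Prop :=
  ∃ p l q : ℕ, Even p ∧ Odd l ∧ Odd q ∧ IsThetaGraph M.graph p l q ∧
    OddCyclesSig M Even ∧ EvenCyclesSig M (fun _ s => (q + l + s) % 4 = 2)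

/-- `M` is a disjoint union of `k` even cycles and one odd cycle with even signature. -/
def IsDisjointUnionEvenCyclesOddCycleEvenSig (M : MixedGraph V) (k : ℤ) : Prop :=
  (∀ c : M.graph.ConnectedComponent, IsCycleMG (M.comp c)) ∧
  (({c : M.graph.ConnectedComponent | Even (Nat.card c.supp)}.ncard : ℤ) = k) ∧
  (∃! c : M.graph.ConnectedComponent, Odd (Nat.card c.supp)) ∧
  (∀ c : M.graph.ConnectedComponent, Odd (Nat.card c.supp) →
    CycleSig (M.comp c) ⊤ Even)

/-- The family 𝔉₀. -/
def MemF0 [Fintype V] [DecidableEq V] (M : MixedGraph V) : Prop :=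
  M.graph.Connected ∧ 2 ≤ cyclomatic M.graph ∧ CyclesVertexDisjoint M.graph ∧
  NoPendantVerts M.graph ∧
  (∃ (C₀ : M.graph.Subgraph) (x₀ : V), IsPendantCycle M.graph C₀ x₀ ∧ Odd C₀.verts.ncard ∧
    CycleSig M C₀ Even ∧
    ∀ C : M.graph.Subgraph, IsCycleSubgraph C → C ≠ C₀ →
      Even C.verts.ncard ∧ CycleSig M C (fun s => s % 4 = C.verts.ncard % 4)) ∧
  (∃ (Cq : M.graph.Subgraph) (x : V), IsPendantCycle M.graph Cq x ∧ Even Cq.verts.ncard ∧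
    ∃ S : Set ↥(Cq.vertsᶜ ∪ {x}),
      PendantReaches (M.induce (Cq.vertsᶜ ∪ {x})).graph S ∧
      NoPendantIn (M.induce (Cq.vertsᶜ ∪ {x})).graph S ∧
      IsDisjointUnionEvenCyclesOddCycleEvenSig
        ((M.induce (Cq.vertsᶜ ∪ {x})).induce S)
        (cyclomatic (M.induce (Cq.vertsᶜ ∪ {x})).graph))

/-- The family 𝔉₂ = 𝔉₀ ∪ 𝔜₁ ∪ 𝔜₂ together with the mixed odd cycles of even signature. -/
def MemF2 [Fintype V] [DecidableEq V] (M : MixedGraph V) : Prop :=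
  MemF0 M ∨ MemY1 M ∨ MemY2 M ∨
    (IsCycleMG M ∧ Odd (Nat.card V) ∧ CycleSig M ⊤ Even)

/-- A connected component that is either an even cycle C̃_q with σ ≡ q (mod 4),
or an isolated vertex. -/
def GoodOtherComp (M : MixedGraph V) : Prop :=
  (IsCycleMG M ∧ Even (Nat.card V) ∧
    CycleSig M ⊤ (fun s => s % 4 = (Nat.card V) % 4)) ∨
  Nat.card V = 1

/-- A fractional matching of `G`, given as a weight function on `Sym2 V` vanishing
outside the edge set. -/
def IsFracMatching [Fintype V] [DecidableEq V] (G : SimpleGraph V) (f : Sym2 V → ℝ) : Prop :=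
  (∀ e ∈ G.edgeSet, 0 ≤ f e ∧ f e ≤ 1) ∧ (∀ e, e ∉ G.edgeSet → f e = 0) ∧
    ∀ v : V, ∑ e ∈ Finset.univ.filter (fun e : Sym2 V => v ∈ e), f e ≤ 1

/-- The fractional matching number m*(G). -/
noncomputable def fracMatchingNumber [Fintype V] [DecidableEq V] (G : SimpleGraph V) : ℝ :=
  sSup {x : ℝ | ∃ f : Sym2 V → ℝ, IsFracMatching G f ∧ ∑ e : Sym2 V, f e = x}

/-- Membership in the family ℱ : fractional matchings of total weight m*(G) taking
values in {0, 1/2, 1}. -/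
def InOptFamily [Fintype V] [DecidableEq V] (G : SimpleGraph V) (f : Sym2 V → ℝ) : Prop :=
  IsFracMatching G f ∧ (∑ e : Sym2 V, f e) = fracMatchingNumber G ∧
    ∀ e : Sym2 V, f e = 0 ∨ f e = 1 / 2 ∨ f e = 1

/-- An optimal fractional matching: a member of ℱ with the largest number of
edges of weight 1. -/
def IsOptFracMatching [Fintype V] [DecidableEq V] (G : SimpleGraph V) (f : Sym2 V → ℝ) : Prop :=
  InOptFamily G f ∧
    ∀ g : Sym2 V → ℝ, InOptFamily G g →
      {e : Sym2 V | g e = 1}.ncard ≤ {e : Sym2 V | f e = 1}.ncard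

/-- E₁(C) : the edges of `G` with exactly one endpoint on the cycle `C`. -/
def cutEdges (G : SimpleGraph V) (C : G.Subgraph) : Set (Sym2 V) :=
  {e | e ∈ G.edgeSet ∧ ∃ a b : V, e = s(a, b) ∧ a ∈ C.verts ∧ b ∉ C.verts}

/-!
A theta graph consists of three paths `W t` from `a` to `b`, and its cycles are the closed walks
that run along one path and back along another. With the given parities exactly one of them is
even, and cutting the cycle through two of the paths open gives a Hamiltonian path, so that
`2 m(G) = |V|`, and the rank is the asserted one iff the kernel of `H` is a line.

Dividing the values of a vector along each path by suitable powers of `i` turns the row of an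
interior vertex into `k (j + 2) = k j`, so a kernel vector is determined by its value at `a` and
its values at the three neighbours of `a`. What remains is a linear system in these four unknowns
that depends only on the powers of `i` reached at `b`, and its solution space is a line iff these
satisfy `γ₁ = γ₂` and `γ₀² ≠ γ₁²`. The exponents are path length minus signed arc sum, which
turns the two conditions into those on the signatures of the even and of the odd cycles.
-/

section walkSum

variable {G : SimpleGraph V} {s : V → V → ℤ} {u v : V}

/-- The sum of a weight `s` on ordered pairs of vertices over the steps of a walk. -/
def walkSum (s : V → V → ℤ) {u v : V} (w : G.Walk u v) : ℤ :=
  (w.darts.map fun d => s d.fst d.snd).sum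

@[simp] lemma walkSum_nil : walkSum s (SimpleGraph.Walk.nil : G.Walk u u) = 0 := rfl

@[simp] lemma walkSum_cons {w : V} (h : G.Adj u v) (p : G.Walk v w) :
    walkSum s (.cons h p) = s u v + walkSum s p := by
  simp [walkSum]

lemma walkSum_append {w : V} (p : G.Walk u v) (q : G.Walk v w) :
    walkSum s (p.append q) = walkSum s p + walkSum s q := by
  simp [walkSum]

lemma walkSum_reverse (hs : ∀ x y, s y x = -s x y) (p : G.Walk u v) :
    walkSum s p.reverse = -walkSum s p := by
  induction p with
  | nil => simp
  | @cons u v w h p ih =>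
    rw [SimpleGraph.Walk.reverse_cons, walkSum_append, ih, walkSum_cons, walkSum_cons,
      walkSum_nil, hs u v]
    ring

lemma walkSum_eq_sum_getVert (p : G.Walk u v) :
    walkSum s p = ∑ i ∈ Finset.range p.length, s (p.getVert i) (p.getVert (i + 1)) := by
  induction p with
  | nil => simp
  | cons h p ih =>
    rw [SimpleGraph.Walk.length_cons, Finset.sum_range_succ', walkSum_cons, ih, add_comm]
    simp only [SimpleGraph.Walk.getVert_cons_succ, SimpleGraph.Walk.getVert_zero]

lemma walkSum_sub_potential (φ : V → ℤ) (p : G.Walk u v) :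
    walkSum (fun x y => s x y - (φ y - φ x)) p = walkSum s p - (φ v - φ u) := by
  induction p with
  | nil => simp
  | cons h p ih => rw [walkSum_cons, walkSum_cons, ih]; ring

lemma natAbs_walkSum_eq_of_forall_edge_ne (hs : ∀ x y, s y x = -s x y) {w : G.Walk u v}
    (hw : w.edges.Nodup) {a b : V} (hab : s(a, b) ∈ w.edges)
    (h0 : ∀ d ∈ w.darts, d.edge ≠ s(a, b) → s d.fst d.snd = 0) :
    (walkSum s w).natAbs = (s a b).natAbs := by
  obtain ⟨d₀, hd₀, hedge⟩ := List.mem_map.1 hab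
  have hcount : w.darts.count d₀ = 1 := List.count_eq_one_of_mem (.of_map _ hw) hd₀
  have hzero : ∀ d, d ≠ d₀ → d ∈ w.darts → s d.fst d.snd = 0 := fun d hne hd =>
    h0 d hd fun he => hne (List.inj_on_of_nodup_map hw hd hd₀ (he.trans hedge.symm))
  rw [walkSum, List.sum_map_eq_nsmul_single d₀ _ hzero, hcount, one_nsmul]
  rcases Sym2.eq_iff.1 (show s(d₀.fst, d₀.snd) = s(a, b) from hedge) with ⟨h1, h2⟩ | ⟨h1, h2⟩
  · rw [h1, h2]
  · rw [h1, h2, hs, Int.natAbs_neg]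

lemma exists_potential_of_isPath (s : V → V → ℤ) (p : G.Walk u v) (hp : p.IsPath) :
    ∃ φ : V → ℤ, ∀ d ∈ p.darts, φ d.snd - φ d.fst = s d.fst d.snd := by
  induction p with
  | nil => simp
  | @cons u v w h p ih =>
    rw [SimpleGraph.Walk.cons_isPath_iff] at hp
    obtain ⟨φ, hφ⟩ := ih hp.1
    have hne : ∀ {x}, x ∈ p.support → x ≠ u := fun hx hxu => hp.2 (hxu ▸ hx)
    refine ⟨Function.update φ u (φ v - s u v), fun d hd => ?_⟩
    rw [SimpleGraph.Walk.darts_cons, List.mem_cons] at hd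
    rcases hd with rfl | hd
    · simp [h.ne']
    · rw [Function.update_of_ne (hne (p.dart_snd_mem_support_of_mem_darts hd)),
        Function.update_of_ne (hne (p.dart_fst_mem_support_of_mem_darts hd)), hφ d hd]

-- Subtracting a potential that agrees with `s` on all edges of the first cycle but one reduces
-- both sums to the weight of that edge, up to sign.
lemma natAbs_walkSum_eq_of_isCycle (hs : ∀ x y, s y x = -s x y) {w : G.Walk u u}
    {w' : G.Walk v v} (hw : w.IsCycle) (hw' : w'.IsCycle)
    (hedges : ∀ e, e ∈ w.edges ↔ e ∈ w'.edges) :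
    (walkSum s w).natAbs = (walkSum s w').natAbs := by
  cases w with
  | nil => exact absurd rfl hw.ne_nil
  | @cons _ x _ hux p =>
    obtain ⟨φ, hφ⟩ := exists_potential_of_isPath s p ((p.cons_isCycle_iff hux).1 hw).1
    let r : V → V → ℤ := fun y z => s y z - (φ z - φ y)
    have hr : ∀ y z, r z y = -r y z := fun y z => by simp only [r, hs y z]; ring
    have hr_zero : ∀ d : G.Dart, d.edge ∈ (SimpleGraph.Walk.cons hux p).edges → d.edge ≠ s(u, x) →
        r d.fst d.snd = 0 := by
      intro d hd hne
      obtain ⟨d', hd', he⟩ := List.mem_map.1 ((List.mem_cons.1 hd).resolve_left hne)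
      have hd'0 : r d'.fst d'.snd = 0 := sub_eq_zero.2 (hφ d' hd').symm
      rcases (SimpleGraph.dart_edge_eq_iff d' d).1 he with rfl | rfl
      · exact hd'0
      · exact neg_eq_zero.1 ((hr _ _).symm.trans hd'0)
    have hreduce {y : V} (q : G.Walk y y) (hq : q.IsCycle)
        (hqe : ∀ e, e ∈ q.edges ↔ e ∈ (SimpleGraph.Walk.cons hux p).edges) :
        (walkSum s q).natAbs = (r u x).natAbs := by
      rw [← natAbs_walkSum_eq_of_forall_edge_ne hr hq.edges_nodup
          ((hqe _).2 (List.mem_cons_self ..))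
          fun d hd => hr_zero d ((hqe _).1 (List.mem_map_of_mem hd)),
        walkSum_sub_potential, sub_self, sub_zero]
    rw [hreduce _ hw fun _ => Iff.rfl, hreduce _ hw' fun e => (hedges e).symm]

end walkSum

section signature

variable {M : MixedGraph V}

/-- The signed arc indicator: `1` on an arc `u → v`, `-1` on an arc `v → u` and `0` otherwise. -/
def sgnArc (M : MixedGraph V) (u v : V) : ℤ :=
  (if M.arc u v then 1 else 0) - (if M.arc v u then 1 else 0)

lemma sgnArc_swap (M : MixedGraph V) (u v : V) : sgnArc M v u = -sgnArc M u v := by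
  simp [sgnArc]

lemma walkSignature_eq_natAbs_walkSum {u : V} (w : M.graph.Walk u u) :
    walkSignature M w = (walkSum (sgnArc M) w).natAbs := by
  simp only [walkSignature, walkSum, sgnArc]
  congr 1
  induction w.darts with
  | nil => simp
  | cons d l ih =>
    simp only [List.countP_cons, List.map_cons, List.sum_cons, ← ih]
    push_cast
    ring

lemma cycleSig_toSubgraph_iff {u : V} {w : M.graph.Walk u u} (hw : w.IsCycle) {P : ℕ → Prop} :
    CycleSig M w.toSubgraph P ↔ P (walkSum (sgnArc M) w).natAbs := by
  constructor
  · rintro ⟨v, w', hw', -, hedges, hP⟩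
    rw [walkSignature_eq_natAbs_walkSum] at hP
    rwa [natAbs_walkSum_eq_of_isCycle (sgnArc_swap M) hw hw']
    intro e
    rw [← SimpleGraph.Walk.mem_edges_toSubgraph, ← hedges]
    rfl
  · intro hP
    refine ⟨u, w, hw, ?_, ?_, by rwa [walkSignature_eq_natAbs_walkSum]⟩
    · exact w.verts_toSubgraph.symm
    · exact w.edgeSet_toSubgraph.symm

end signature

section matching

variable {G : SimpleGraph V}

lemma two_mul_ncard_edgeSet_of_isMatching [Finite V] {N : G.Subgraph} (hN : N.IsMatching) :
    2 * N.edgeSet.ncard = N.verts.ncard := by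
  have := Fintype.ofFinite V
  have hsum : Fintype.card N.verts = 2 * N.coe.edgeFinset.card := by
    rw [← SimpleGraph.sum_degrees_eq_twice_card_edges N.coe, ← Finset.card_univ,
      Finset.card_eq_sum_ones]
    refine Finset.sum_congr rfl fun v _ => ?_
    rw [SimpleGraph.Subgraph.coe_degree]
    convert (SimpleGraph.Subgraph.isMatching_iff_forall_degree.1 hN v v.2).symm
  have hedges : N.edgeSet.ncard = N.coe.edgeFinset.card := by
    rw [← N.image_coe_edgeSet_coe, Set.ncard_image_of_injective _
      (Sym2.map.injective Subtype.val_injective), ← SimpleGraph.coe_edgeFinset,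
      Set.ncard_coe_finset]
  rw [hedges, ← hsum, ← Nat.card_coe_set_eq, Nat.card_eq_fintype_card]

lemma two_mul_matchingNumber_of_isPerfectMatching [Fintype V] {N : G.Subgraph}
    (hN : N.IsPerfectMatching) : 2 * matchingNumber G = Fintype.card V := by
  have hcard : 2 * N.edgeSet.ncard = Fintype.card V := by
    rw [two_mul_ncard_edgeSet_of_isMatching hN.1, SimpleGraph.Subgraph.isSpanning_iff.1 hN.2,
      Set.ncard_univ, Nat.card_eq_fintype_card]
  have hgreatest : IsGreatest {k | ∃ N : G.Subgraph, N.IsMatching ∧ N.edgeSet.ncard = k}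
      N.edgeSet.ncard := by
    refine ⟨⟨N, hN.1, rfl⟩, ?_⟩
    rintro k ⟨N', hN', rfl⟩
    have hle : N'.verts.ncard ≤ Fintype.card V := by
      rw [← Nat.card_eq_fintype_card]
      exact Set.ncard_le_card _
    have := two_mul_ncard_edgeSet_of_isMatching hN'
    omega
  rw [matchingNumber, hgreatest.csSup_eq, hcard]

lemma exists_isMatching_verts_eq_support {u v : V} : ∀ p : G.Walk u v, p.IsPath → Odd p.length →
    ∃ N : G.Subgraph, N.IsMatching ∧ N.verts = {x | x ∈ p.support}
  | .nil, _, hodd => by simp at hodd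
  | .cons h .nil, _, _ => ⟨G.subgraphOfAdj h, .subgraphOfAdj h, by ext; simp⟩
  | .cons (v := x) h (.cons h' p), hp, hodd => by
    obtain ⟨hp', hu⟩ := (SimpleGraph.Walk.cons_isPath_iff _ _).1 hp
    obtain ⟨hp'', hx⟩ := (SimpleGraph.Walk.cons_isPath_iff _ _).1 hp'
    obtain ⟨N, hN, hverts⟩ := exists_isMatching_verts_eq_support p hp''
      (by simpa [Nat.odd_add_one] using hodd)
    refine ⟨G.subgraphOfAdj h ⊔ N, .sup (.subgraphOfAdj h) hN ?_, ?_⟩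
    · rw [(SimpleGraph.Subgraph.IsMatching.subgraphOfAdj h).support_eq_verts, hN.support_eq_verts,
        hverts, Set.disjoint_left]
      rintro y (rfl | rfl) hy
      · exact hu (List.mem_cons_of_mem _ hy)
      · exact hx hy
    · ext y
      simp [hverts, or_assoc]

lemma two_mul_matchingNumber_of_isHamiltonian [Fintype V] {u v : V} {p : G.Walk u v}
    (hp : p.IsHamiltonian) (hodd : Odd p.length) : 2 * matchingNumber G = Fintype.card V := by
  obtain ⟨N, hN, hverts⟩ := exists_isMatching_verts_eq_support p hp.isPath hodd
  refine two_mul_matchingNumber_of_isPerfectMatching ⟨hN, fun x => ?_⟩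
  rw [hverts]
  exact hp.mem_support x

end matching

section isThetaSystem

variable {ι : Type*} {G : SimpleGraph V} {a b : V} {W : ι → G.Walk a b}

/-- A theta system: a graph presented as the union of distinct paths joining two vertices `a ≠ b`
that pairwise meet only in `a` and `b`. The graph `θ(p,l,q)` is the case of three paths; the
number of paths is left arbitrary, and no path is distinguished by its parity. -/
structure IsThetaSystem (W : ι → G.Walk a b) : Prop where
  ne : a ≠ b
  injective : Function.Injective W
  isPath : ∀ t, (W t).IsPath
  eq_or_eq_of_mem_support : ∀ ⦃t t'⦄, t ≠ t' → ∀ ⦃v⦄, v ∈ (W t).support → v ∈ (W t').support →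
    v = a ∨ v = b
  exists_mem_support : ∀ v, ∃ t, v ∈ (W t).support
  exists_mem_edges : ∀ e ∈ G.edgeSet, ∃ t, e ∈ (W t).edges

namespace IsThetaSystem

lemma reverse (hW : IsThetaSystem W) : IsThetaSystem fun t => (W t).reverse where
  ne := hW.ne.symm
  injective _ _ h := hW.injective (SimpleGraph.Walk.reverse_injective h)
  isPath t := (hW.isPath t).reverse
  eq_or_eq_of_mem_support t t' hne v hv hv' := by
    rw [SimpleGraph.Walk.support_reverse, List.mem_reverse] at hv hv'
    exact (hW.eq_or_eq_of_mem_support hne hv hv').symm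
  exists_mem_support v := by simpa using hW.exists_mem_support v
  exists_mem_edges e he := by simpa using hW.exists_mem_edges e he

lemma length_pos (hW : IsThetaSystem W) (t : ι) : 0 < (W t).length :=
  Nat.pos_of_ne_zero fun h => hW.ne (SimpleGraph.Walk.eq_of_length_eq_zero h)

lemma not_nil (hW : IsThetaSystem W) (t : ι) : ¬(W t).Nil :=
  SimpleGraph.Walk.not_nil_of_ne hW.ne

lemma one_lt_length_or (hW : IsThetaSystem W) {t t' : ι} (hne : t ≠ t') :
    1 < (W t).length ∨ 1 < (W t').length := by
  by_contra! hle
  refine hne (hW.injective ?_)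
  have h1 : (W t).length = 1 := hle.1.antisymm (hW.length_pos t)
  have h1' : (W t').length = 1 := hle.2.antisymm (hW.length_pos t')
  refine SimpleGraph.Walk.ext_getVert_le_length (h1.trans h1'.symm) fun k hk => ?_
  obtain rfl | rfl : k = 0 ∨ k = 1 := by omega
  · simp only [SimpleGraph.Walk.getVert_zero]
  · rw [SimpleGraph.Walk.getVert_of_length_le _ h1.le,
      SimpleGraph.Walk.getVert_of_length_le _ h1'.le]

lemma getVert_eq_getVert (hW : IsThetaSystem W) {t t' : ι} {i j : ℕ} (hi : i ≤ (W t).length)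
    (hj : j ≤ (W t').length) (h : (W t).getVert i = (W t').getVert j) :
    (t = t' ∧ i = j) ∨ (i = 0 ∧ j = 0) ∨ (i = (W t).length ∧ j = (W t').length) := by
  obtain rfl | hne := eq_or_ne t t'
  · exact .inl ⟨rfl, (hW.isPath t).getVert_injOn hi hj h⟩
  have hmem : (W t).getVert i ∈ (W t').support := h ▸ (W t').getVert_mem_support j
  rcases hW.eq_or_eq_of_mem_support hne ((W t).getVert_mem_support i) hmem with ha | hb
  · exact .inr (.inl ⟨((hW.isPath t).getVert_eq_start_iff hi).1 ha,
      ((hW.isPath t').getVert_eq_start_iff hj).1 (h ▸ ha)⟩)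
  · exact .inr (.inr ⟨((hW.isPath t).getVert_eq_end_iff hi).1 hb,
      ((hW.isPath t').getVert_eq_end_iff hj).1 (h ▸ hb)⟩)

lemma snd_injective (hW : IsThetaSystem W) : Function.Injective fun t => (W t).snd := by
  intro t t' h
  by_contra hne
  have := hW.one_lt_length_or hne
  have := hW.getVert_eq_getVert (hW.length_pos t) (hW.length_pos t') h
  grind

lemma neighborSet_start (hW : IsThetaSystem W) :
    G.neighborSet a = Set.range fun t => (W t).snd := by
  ext v
  simp only [SimpleGraph.mem_neighborSet, Set.mem_range]
  constructor
  · intro h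
    obtain ⟨t, ht⟩ := hW.exists_mem_edges _ (G.mem_edgeSet.2 h)
    exact ⟨t, ((hW.isPath t).eq_snd_of_mem_edges ht).symm⟩
  · rintro ⟨t, rfl⟩
    exact (W t).adj_snd (hW.not_nil t)

lemma mem_edges_of_adj_getVert (hW : IsThetaSystem W) {t : ι} {i : ℕ} (h0 : 0 < i)
    (hi : i < (W t).length) {v : V} (h : G.Adj ((W t).getVert i) v) :
    s((W t).getVert i, v) ∈ (W t).edges := by
  obtain ⟨t', ht'⟩ := hW.exists_mem_edges _ (G.mem_edgeSet.2 h)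
  obtain ⟨j, hj, hj'⟩ :=
    SimpleGraph.Walk.mem_support_iff_exists_getVert.1 ((W t').fst_mem_support_of_mem_edges ht')
  have := hW.getVert_eq_getVert hj' hi.le hj
  obtain rfl : t' = t := by grind
  exact ht'

lemma neighborSet_getVert (hW : IsThetaSystem W) {t : ι} {i : ℕ} (hi : i + 1 < (W t).length) :
    G.neighborSet ((W t).getVert (i + 1)) = {(W t).getVert i, (W t).getVert (i + 2)} := by
  refine Eq.trans ?_ ((hW.isPath t).neighborSet_toSubgraph_internal i.succ_ne_zero hi)
  ext v
  rw [SimpleGraph.mem_neighborSet, SimpleGraph.Subgraph.mem_neighborSet,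
    SimpleGraph.Walk.adj_toSubgraph_iff_mem_edges]
  exact ⟨hW.mem_edges_of_adj_getVert i.succ_pos hi, fun h => (W t).adj_of_mem_edges h⟩

lemma exists_forall_getVert_eq (hW : IsThetaSystem W) {α : Type*} (F : ι → ℕ → α)
    (h0 : ∀ t t', F t 0 = F t' 0) (h1 : ∀ t t', F t (W t).length = F t' (W t').length) :
    ∃ f : V → α, ∀ t, ∀ i ≤ (W t).length, f ((W t).getVert i) = F t i := by
  have hcover (v : V) : ∃ t i, i ≤ (W t).length ∧ (W t).getVert i = v := by
    obtain ⟨t, ht⟩ := hW.exists_mem_support v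
    obtain ⟨i, hi, hle⟩ := SimpleGraph.Walk.mem_support_iff_exists_getVert.1 ht
    exact ⟨t, i, hle, hi⟩
  choose T I hI hv using hcover
  refine ⟨fun v => F (T v) (I v), fun t i hi => ?_⟩
  rcases hW.getVert_eq_getVert (hI _) hi (hv ((W t).getVert i)) with
    ⟨ht, h⟩ | ⟨h, rfl⟩ | ⟨h, rfl⟩
  · simp only [ht, h]
  · simp only [h]
    exact h0 _ _
  · simp only [h]
    exact h1 _ _

end IsThetaSystem

lemma injective_of_length_ne_one (hab : a ≠ b) (hpath : ∀ t, (W t).IsPath)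
    (hmeet : ∀ t t', t ≠ t' → ∀ v, v ∈ (W t).support → v ∈ (W t').support → v = a ∨ v = b)
    (hlen : ∀ t t', t ≠ t' → (W t).length = 1 → (W t').length ≠ 1) : Function.Injective W := by
  intro t t' h
  by_contra hne
  have hpos : 1 ≤ (W t).length :=
    Nat.one_le_iff_ne_zero.2 fun h0 => hab (SimpleGraph.Walk.eq_of_length_eq_zero h0)
  have hone : (W t).length = 1 := by
    rcases hmeet t t' hne (W t).snd ((W t).getVert_mem_support 1)
      (h ▸ (W t).getVert_mem_support 1) with ha | hb
    · exact absurd (((hpath t).getVert_eq_start_iff hpos).1 ha) one_ne_zero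
    · exact (((hpath t).getVert_eq_end_iff hpos).1 hb).symm
  exact hlen t t' hne hone (h ▸ hone)

lemma IsThetaGraph.exists_isThetaSystem {p l q : ℕ} (hG : IsThetaGraph G p l q) :
    ∃ (a b : V) (W : Fin 3 → G.Walk a b), IsThetaSystem W ∧
      (W 0).length + 1 = p ∧ (W 1).length + 1 = l ∧ (W 2).length + 1 = q := by
  obtain ⟨hp, hl, hq, hpl, hpq, hlq, a, b, W₁, W₂, W₃, hW₁, hW₂, hW₃, hlen₁, hlen₂, hlen₃,
    hsupport, hedges, h₁₂, h₁₃, h₂₃⟩ := hG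
  let W : Fin 3 → G.Walk a b := ![W₁, W₂, W₃]
  have hpath : ∀ t, (W t).IsPath := by
    simp only [Fin.forall_fin_succ]
    exact ⟨hW₁, hW₂, hW₃, nofun⟩
  obtain ⟨hp', hl', hq'⟩ : (W 0).length + 1 = p ∧ (W 1).length + 1 = l ∧ (W 2).length + 1 = q :=
    ⟨show W₁.length + 1 = p by omega, show W₂.length + 1 = l by omega,
      show W₃.length + 1 = q by omega⟩
  have hlen : ∀ t t', t ≠ t' → (W t).length = 1 → (W t').length ≠ 1 := by
    intro t t' hne
    fin_cases t <;> fin_cases t' <;> grind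
  have hmeet : ∀ t t', t ≠ t' → ∀ v, v ∈ (W t).support → v ∈ (W t').support → v = a ∨ v = b := by
    simp only [Set.ext_iff, Set.mem_insert_iff, Set.mem_singleton_iff] at h₁₂ h₁₃ h₂₃
    intro t t' hne v h h'
    fin_cases t <;> fin_cases t' <;> first
      | exact absurd rfl hne
      | exact (h₁₂ v).1 ⟨h, h'⟩
      | exact (h₁₃ v).1 ⟨h, h'⟩
      | exact (h₂₃ v).1 ⟨h, h'⟩
      | exact (h₁₂ v).1 ⟨h', h⟩
      | exact (h₁₃ v).1 ⟨h', h⟩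
      | exact (h₂₃ v).1 ⟨h', h⟩
  have hne : a ≠ b := by
    rw [ne_eq, ← (hpath 0).nil_iff_eq, ← SimpleGraph.Walk.length_eq_zero_iff]
    omega
  refine ⟨a, b, W, ⟨hne, injective_of_length_ne_one hne hpath hmeet hlen, hpath, hmeet,
    fun v => ?_, fun e he => ?_⟩, hp', hl', hq'⟩
  · simpa [Fin.exists_fin_succ, W] using hsupport v
  · simpa [Fin.exists_fin_succ, W] using hedges e he

end isThetaSystem

section cycle

variable {ι : Type*} {G : SimpleGraph V}

lemma isCycleSubgraph_toSubgraph {u : V} {w : G.Walk u u} (hw : w.IsCycle) :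
    IsCycleSubgraph w.toSubgraph :=
  ⟨w.toSubgraph_connected, fun _ hv =>
    hw.ncard_neighborSet_toSubgraph_eq_two (w.mem_verts_toSubgraph.1 hv)⟩

lemma start_notMem_tail_support_of_isPath {u v : V} {w : G.Walk u v} (hw : w.IsPath) :
    u ∉ w.support.tail := by
  have hnodup := hw.support_nodup
  rw [← w.cons_tail_support] at hnodup
  exact (List.nodup_cons.1 hnodup).1

lemma mem_support_iff_mem_dropLast_support_or {u v x : V} {w : G.Walk u v} (hw : ¬w.Nil) :
    x ∈ w.support ↔ x ∈ w.dropLast.support ∨ x = v := by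
  rw [← w.support_dropLast_concat hw, List.mem_append, List.mem_singleton]

lemma end_notMem_dropLast_support_of_isPath {u v : V} {w : G.Walk u v} (hw : w.IsPath)
    (hnil : ¬w.Nil) : v ∉ w.dropLast.support := by
  have hnodup := hw.support_nodup
  rw [← w.support_dropLast_concat hnil] at hnodup
  exact fun hv => List.disjoint_of_nodup_append hnodup hv (List.mem_singleton_self _)

lemma mem_tail_support_iff_of_not_nil {u v : V} {w : G.Walk u u} (hw : ¬w.Nil) :
    v ∈ w.support.tail ↔ v ∈ w.support := by
  rw [w.mem_support_iff, or_iff_right_of_imp]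
  rintro rfl
  exact SimpleGraph.Walk.end_mem_tail_support hw

lemma ncard_verts_toSubgraph_of_isCycle {u : V} {w : G.Walk u u} (hw : w.IsCycle) :
    w.toSubgraph.verts.ncard = w.length := by
  have hverts : w.toSubgraph.verts = (w.support.tail.toFinset : Set V) := by
    ext v
    rw [w.mem_verts_toSubgraph, Finset.mem_coe, List.mem_toFinset,
      mem_tail_support_iff_of_not_nil hw.not_nil]
  rw [hverts, Set.ncard_coe_finset, List.toFinset_card_of_nodup hw.support_nodup,
    List.length_tail, w.length_support, Nat.add_sub_cancel]

namespace IsCycleSubgraph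

variable {C C' : G.Subgraph}

lemma exists_adj (hC : IsCycleSubgraph C) {v : V} (hv : v ∈ C.verts) : ∃ w, C.Adj v w :=
  Set.nonempty_of_ncard_ne_zero ((hC.2 v hv).trans_ne two_ne_zero)

lemma ext_adj (hC : IsCycleSubgraph C) (hC' : IsCycleSubgraph C')
    (h : ∀ u v, C.Adj u v ↔ C'.Adj u v) : C = C' := by
  refine SimpleGraph.Subgraph.ext (Set.ext fun v => ⟨fun hv => ?_, fun hv => ?_⟩)
    (funext₂ fun u v => propext (h u v))
  · obtain ⟨w, hw⟩ := hC.exists_adj hv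
    exact ((h v w).1 hw).fst_mem
  · obtain ⟨w, hw⟩ := hC'.exists_adj hv
    exact ((h v w).2 hw).fst_mem

end IsCycleSubgraph

/-- The closed walk running along the path `W t` and back along the path `W t'`. For a theta system
and `t ≠ t'` it is a cycle, and every cycle of the graph arises in this way. -/
def thetaCycle {a b : V} (W : ι → G.Walk a b) (t t' : ι) : G.Walk a a :=
  (W t).append (W t').reverse

section

variable {a b : V} {W : ι → G.Walk a b}

lemma length_thetaCycle (t t' : ι) :
    (thetaCycle W t t').length = (W t).length + (W t').length := by
  simp [thetaCycle]

lemma mem_support_thetaCycle {t t' : ι} {v : V} :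
    v ∈ (thetaCycle W t t').support ↔ v ∈ (W t).support ∨ v ∈ (W t').support := by
  rw [thetaCycle, SimpleGraph.Walk.mem_support_append_iff, SimpleGraph.Walk.support_reverse,
    List.mem_reverse]

lemma walkSum_thetaCycle {s : V → V → ℤ} (hs : ∀ x y, s y x = -s x y) (t t' : ι) :
    walkSum s (thetaCycle W t t') = walkSum s (W t) - walkSum s (W t') := by
  rw [thetaCycle, walkSum_append, walkSum_reverse hs, sub_eq_add_neg]

lemma adj_toSubgraph_thetaCycle {t t' : ι} {u v : V} :
    (thetaCycle W t t').toSubgraph.Adj u v ↔ s(u, v) ∈ (W t).edges ∨ s(u, v) ∈ (W t').edges := by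
  simp [thetaCycle, SimpleGraph.Walk.adj_toSubgraph_iff_mem_edges]

lemma toSubgraph_thetaCycle_comm (t t' : ι) :
    (thetaCycle W t t').toSubgraph = (thetaCycle W t' t).toSubgraph := by
  simp [thetaCycle, sup_comm]

end

namespace IsThetaSystem

variable {a b : V} {W : ι → G.Walk a b} {C : G.Subgraph}

lemma isCycle_thetaCycle (hW : IsThetaSystem W) {t t' : ι} (hne : t ≠ t') :
    (thetaCycle W t t').IsCycle := by
  refine (hW.isPath t).isCycle_append (hW.isPath t').reverse (fun v hv hv' => ?_)
    (by simpa using hW.one_lt_length_or hne)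
  have hmem' : v ∈ (W t').support := by
    simpa using List.mem_of_mem_tail hv'
  rcases hW.eq_or_eq_of_mem_support hne (List.mem_of_mem_tail hv) hmem' with rfl | rfl
  · exact start_notMem_tail_support_of_isPath (hW.isPath t) hv
  · exact start_notMem_tail_support_of_isPath (hW.isPath t').reverse hv'

lemma adj_getVert_iff_of_isCycleSubgraph (hW : IsThetaSystem W) (hC : IsCycleSubgraph C) {t : ι}
    {i : ℕ} (hi : i + 1 < (W t).length) (hv : (W t).getVert (i + 1) ∈ C.verts) (v : V) :
    C.Adj ((W t).getVert (i + 1)) v ↔ v = (W t).getVert i ∨ v = (W t).getVert (i + 2) := by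
  have hsub : C.neighborSet ((W t).getVert (i + 1)) ⊆ {(W t).getVert i, (W t).getVert (i + 2)} :=
    hW.neighborSet_getVert hi ▸ C.neighborSet_subset _
  have heq := Set.eq_of_subset_of_ncard_le hsub
    (((Set.ncard_insert_le _ _).trans_eq (by rw [Set.ncard_singleton])).trans (hC.2 _ hv).ge)
    (Set.toFinite _)
  exact Set.ext_iff.1 heq v

-- A cycle entering a path of the system must follow it to its end.
lemma adj_getVert_succ_iff_of_isCycleSubgraph (hW : IsThetaSystem W) (hC : IsCycleSubgraph C)
    {t : ι} {i : ℕ} (hi : i < (W t).length) :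
    C.Adj ((W t).getVert i) ((W t).getVert (i + 1)) ↔ C.Adj a (W t).snd := by
  induction i with
  | zero => rw [SimpleGraph.Walk.getVert_zero]
  | succ i ih =>
    rw [← ih (i.lt_succ_self.trans hi)]
    have hadj := hW.adj_getVert_iff_of_isCycleSubgraph hC hi
    exact ⟨fun h => ((hadj h.fst_mem _).2 (.inl rfl)).symm,
      fun h => (hadj h.snd_mem _).2 (.inr rfl)⟩

lemma adj_iff_of_isCycleSubgraph (hW : IsThetaSystem W) (hC : IsCycleSubgraph C) {u v : V} :
    C.Adj u v ↔ ∃ t, C.Adj a (W t).snd ∧ s(u, v) ∈ (W t).edges := by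
  have hedge {t : ι} (ht : s(u, v) ∈ (W t).edges) : C.Adj u v ↔ C.Adj a (W t).snd := by
    obtain ⟨i, hi, he⟩ := (W t).mk_mem_edges_iff_exists.1 ht
    rw [← hW.adj_getVert_succ_iff_of_isCycleSubgraph hC hi, ← SimpleGraph.Subgraph.mem_edgeSet,
      ← he, SimpleGraph.Subgraph.mem_edgeSet]
  constructor
  · intro h
    obtain ⟨t, ht⟩ := hW.exists_mem_edges _ (G.mem_edgeSet.2 h.adj_sub)
    exact ⟨t, (hedge ht).1 h, ht⟩
  · rintro ⟨t, hCt, ht⟩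
    exact (hedge ht).2 hCt

lemma start_mem_verts_of_isCycleSubgraph (hW : IsThetaSystem W) (hC : IsCycleSubgraph C) :
    a ∈ C.verts := by
  obtain ⟨v, hv⟩ := hC.1.nonempty
  obtain ⟨w, hw⟩ := hC.exists_adj hv
  obtain ⟨t, ht, -⟩ := (hW.adj_iff_of_isCycleSubgraph hC).1 hw
  exact ht.fst_mem

lemma exists_eq_toSubgraph_thetaCycle (hW : IsThetaSystem W) (hC : IsCycleSubgraph C) :
    ∃ t t', t ≠ t' ∧ C = (thetaCycle W t t').toSubgraph := by
  have himage : (fun t => (W t).snd) '' {t | C.Adj a (W t).snd} = C.neighborSet a := by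
    have hsub : C.neighborSet a ⊆ Set.range fun t => (W t).snd :=
      hW.neighborSet_start ▸ C.neighborSet_subset a
    exact Set.image_preimage_eq_of_subset hsub
  have hncard : {t | C.Adj a (W t).snd}.ncard = 2 := by
    rw [← Set.ncard_image_of_injective _ hW.snd_injective, himage]
    exact hC.2 a (hW.start_mem_verts_of_isCycleSubgraph hC)
  obtain ⟨t, t', hne, hpair⟩ := Set.ncard_eq_two.1 hncard
  refine ⟨t, t', hne, hC.ext_adj (isCycleSubgraph_toSubgraph (hW.isCycle_thetaCycle hne))
    fun u v => ?_⟩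
  have hmem (r : ι) : C.Adj a (W r).snd ↔ r = t ∨ r = t' := Set.ext_iff.1 hpair r
  rw [hW.adj_iff_of_isCycleSubgraph hC, adj_toSubgraph_thetaCycle]
  simp only [hmem, or_and_right, exists_or, exists_eq_left]

lemma forall_isCycleSubgraph_iff (hW : IsThetaSystem W) {Q : G.Subgraph → Prop} :
    (∀ C, IsCycleSubgraph C → Q C) ↔ ∀ t t', t ≠ t' → Q (thetaCycle W t t').toSubgraph := by
  constructor
  · exact fun h t t' hne => h _ (isCycleSubgraph_toSubgraph (hW.isCycle_thetaCycle hne))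
  · rintro h C hC
    obtain ⟨t, t', hne, rfl⟩ := hW.exists_eq_toSubgraph_thetaCycle hC
    exact h t t' hne

lemma ncard_verts_thetaCycle (hW : IsThetaSystem W) {t t' : ι} (hne : t ≠ t') :
    (thetaCycle W t t').toSubgraph.verts.ncard = (W t).length + (W t').length := by
  rw [ncard_verts_toSubgraph_of_isCycle (hW.isCycle_thetaCycle hne), length_thetaCycle]

end IsThetaSystem

section mixed

variable {a b : V} {M : MixedGraph V} {W : ι → M.graph.Walk a b}

lemma IsThetaSystem.cycleSig_thetaCycle_iff (hW : IsThetaSystem W) {t t' : ι} (hne : t ≠ t')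
    {P : ℕ → Prop} : CycleSig M (thetaCycle W t t').toSubgraph P ↔
      P (walkSum (sgnArc M) (W t) - walkSum (sgnArc M) (W t')).natAbs := by
  rw [cycleSig_toSubgraph_iff (hW.isCycle_thetaCycle hne), walkSum_thetaCycle (sgnArc_swap M)]

lemma IsThetaSystem.oddCyclesSig_iff (hW : IsThetaSystem W) {P : ℕ → Prop} :
    OddCyclesSig M P ↔ ∀ t t', t ≠ t' → Odd ((W t).length + (W t').length) →
      P (walkSum (sgnArc M) (W t) - walkSum (sgnArc M) (W t')).natAbs := by
  rw [OddCyclesSig, hW.forall_isCycleSubgraph_iff]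
  refine forall₃_congr fun t t' hne => ?_
  rw [hW.ncard_verts_thetaCycle hne, hW.cycleSig_thetaCycle_iff hne]

lemma IsThetaSystem.evenCyclesSig_iff (hW : IsThetaSystem W) {P : ℕ → ℕ → Prop} :
    EvenCyclesSig M P ↔ ∀ t t', t ≠ t' → Even ((W t).length + (W t').length) →
      P ((W t).length + (W t').length)
        (walkSum (sgnArc M) (W t) - walkSum (sgnArc M) (W t')).natAbs := by
  rw [EvenCyclesSig, hW.forall_isCycleSubgraph_iff]
  refine forall₃_congr fun t t' hne => ?_
  rw [hW.ncard_verts_thetaCycle hne, hW.cycleSig_thetaCycle_iff hne]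

end mixed

section threePaths

variable {a b : V} {W : Fin 3 → G.Walk a b}

lemma IsThetaSystem.evenCycleCount_eq_one (hW : IsThetaSystem W) (h0 : Odd (W 0).length)
    (h1 : Even (W 1).length) (h2 : Even (W 2).length) : evenCycleCount G = 1 := by
  rw [evenCycleCount, Set.ncard_eq_one]
  refine ⟨(thetaCycle W 1 2).toSubgraph, Set.ext fun C => ⟨?_, ?_⟩⟩
  · rintro ⟨hC, heven⟩
    obtain ⟨t, t', hne, rfl⟩ := hW.exists_eq_toSubgraph_thetaCycle hC
    rw [hW.ncard_verts_thetaCycle hne] at heven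
    fin_cases t <;> fin_cases t' <;> first
      | rfl
      | exact toSubgraph_thetaCycle_comm 2 1
      | exact absurd rfl hne
      | grind
  · rintro rfl
    have hne : (1 : Fin 3) ≠ 2 := by decide
    exact ⟨isCycleSubgraph_toSubgraph (hW.isCycle_thetaCycle hne),
      hW.ncard_verts_thetaCycle hne ▸ h1.add h2⟩

-- Cut the cycle through the first two paths open after `a` and append the third path without `b`.
lemma IsThetaSystem.exists_isHamiltonian (hW : IsThetaSystem W) :
    ∃ (u v : V) (p : G.Walk u v), p.IsHamiltonian ∧
      p.length + 2 = (W 0).length + (W 1).length + (W 2).length := by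
  have hcycle : (thetaCycle W 0 1).IsCycle := hW.isCycle_thetaCycle (by decide)
  have hmem {v : V} : v ∈ (thetaCycle W 0 1).tail.support ↔
      v ∈ (W 0).support ∨ v ∈ (W 1).support := by
    rw [SimpleGraph.Walk.support_tail_of_not_nil _ hcycle.not_nil,
      mem_tail_support_iff_of_not_nil hcycle.not_nil, mem_support_thetaCycle]
  have hmem2 {v : V} := mem_support_iff_mem_dropLast_support_or (x := v) (hW.not_nil 2)
  let p := (thetaCycle W 0 1).tail.append (W 2).dropLast
  have hdisjoint : (thetaCycle W 0 1).tail.support.Disjoint (W 2).dropLast.support.tail := by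
    intro v hv hv2
    have hdrop : v ∈ (W 2).dropLast.support := List.mem_of_mem_tail hv2
    have hab : v = a ∨ v = b := by
      rcases hmem.1 hv with h | h
      · exact hW.eq_or_eq_of_mem_support (by decide) h (hmem2.2 (.inl hdrop))
      · exact hW.eq_or_eq_of_mem_support (by decide) h (hmem2.2 (.inl hdrop))
    rcases hab with rfl | rfl
    · exact start_notMem_tail_support_of_isPath (hW.isPath 2).dropLast hv2
    · exact end_notMem_dropLast_support_of_isPath (hW.isPath 2) (hW.not_nil 2) hdrop
  have hpath : p.IsPath := by
    refine .mk' ?_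
    rw [SimpleGraph.Walk.support_append]
    exact hcycle.isPath_tail.support_nodup.append (hW.isPath 2).dropLast.support_nodup.tail
      hdisjoint
  refine ⟨_, _, p, hpath.isHamiltonian_of_mem fun v => ?_, ?_⟩
  · rw [SimpleGraph.Walk.mem_support_append_iff, hmem]
    obtain ⟨t, ht⟩ := hW.exists_mem_support v
    fin_cases t
    · exact .inl (.inl ht)
    · exact .inl (.inr ht)
    · rcases hmem2.1 ht with h | rfl
      · exact .inr h
      · exact .inl (.inl (W 0).end_mem_support)
  · have := hW.length_pos 2
    have := SimpleGraph.Walk.length_tail_add_one hcycle.not_nil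
    have := length_thetaCycle (W := W) 0 1
    have := SimpleGraph.Walk.length_dropLast_add_one (hW.not_nil 2)
    rw [SimpleGraph.Walk.length_append]
    omega

lemma IsThetaSystem.two_mul_matchingNumber [Fintype V] (hW : IsThetaSystem W)
    (h : Odd ((W 0).length + (W 1).length + (W 2).length)) :
    2 * matchingNumber G = Fintype.card V := by
  obtain ⟨u, v, p, hp, hlength⟩ := hW.exists_isHamiltonian
  exact two_mul_matchingNumber_of_isHamiltonian hp (by grind)

end threePaths

end cycle

section alternating

variable {α : Type*}

/-- The sequence `A, s, A, s, …`, the general solution of `k (i + 2) = k i`. -/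
def alternating (A s : α) (i : ℕ) : α :=
  if Even i then A else s

lemma alternating_of_even (A s : α) {i : ℕ} (hi : Even i) : alternating A s i = A :=
  if_pos hi

lemma alternating_of_odd (A s : α) {i : ℕ} (hi : Odd i) : alternating A s i = s :=
  if_neg (Nat.not_even_iff_odd.2 hi)

lemma alternating_add_two (A s : α) (i : ℕ) : alternating A s (i + 2) = alternating A s i := by
  simp [alternating, Nat.even_add]

lemma alternating_sub_one (A s : α) {i : ℕ} (hi : 0 < i) :
    alternating A s (i - 1) = alternating A s (i + 1) := by
  rw [← alternating_add_two, show i - 1 + 2 = i + 1 by omega]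

lemma alternating_add [Add α] (A B s t : α) (i : ℕ) :
    alternating (A + B) (s + t) i = alternating A s i + alternating B t i := by
  unfold alternating
  split_ifs <;> rfl

lemma alternating_mul [Mul α] (c A s : α) (i : ℕ) :
    alternating (c * A) (c * s) i = c * alternating A s i := by
  unfold alternating
  split_ifs <;> rfl

lemma eq_alternating {k : ℕ → α} {n : ℕ} (hk : ∀ i, i + 2 ≤ n → k (i + 2) = k i) :
    ∀ i ≤ n, k i = alternating (k 0) (k 1) i := by
  intro i
  induction i using Nat.twoStepInduction with
  | zero => exact fun _ => (alternating_of_even _ _ Even.zero).symm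
  | one => exact fun _ => (alternating_of_odd _ _ odd_one).symm
  | more i ih _ =>
    intro hi
    rw [hk i hi, ih (by omega), alternating_add_two]

end alternating

section thetaSystem

variable {ι K : Type*} [Field K]

/-- The linear system met by a kernel vector of a theta graph whose `t`-th path has length `n t`
and gauge `γ t` at its end: `x.1` is the value at the common start and `x.2 t` the gauged value at
the first vertex after it. The three equations are the row of the start, the row of the end, where
`n t + 1` stands for `n t - 1`, and the agreement of the paths at the end. -/
def thetaSystem [Fintype ι] (γ : ι → K) (n : ι → ℕ) : Submodule K (K × (ι → K)) where
  carrier := {x | ∑ t, x.2 t = 0 ∧ ∑ t, γ t * alternating x.1 (x.2 t) (n t + 1) = 0 ∧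
    ∀ t t', γ t * alternating x.1 (x.2 t) (n t) = γ t' * alternating x.1 (x.2 t') (n t')}
  zero_mem' := by simp [alternating]
  add_mem' := by
    rintro x y ⟨hx, hx', hx''⟩ ⟨hy, hy', hy''⟩
    refine ⟨?_, ?_, fun t t' => ?_⟩
    · simp [Finset.sum_add_distrib, hx, hy]
    · simp [alternating_add, mul_add, Finset.sum_add_distrib, hx', hy']
    · simp [alternating_add, mul_add, hx'' t t', hy'' t t']
  smul_mem' := by
    rintro c x ⟨hx, hx', hx''⟩
    refine ⟨?_, ?_, fun t t' => ?_⟩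
    · simp [← Finset.mul_sum, hx]
    · simp [alternating_mul, mul_left_comm _ c, ← Finset.mul_sum, hx']
    · simp [alternating_mul, mul_left_comm _ c, hx'' t t']

lemma mem_thetaSystem [Fintype ι] {γ : ι → K} {n : ι → ℕ} {x : K × (ι → K)} :
    x ∈ thetaSystem γ n ↔
      ∑ t, x.2 t = 0 ∧ ∑ t, γ t * alternating x.1 (x.2 t) (n t + 1) = 0 ∧
        ∀ t t', γ t * alternating x.1 (x.2 t) (n t) = γ t' * alternating x.1 (x.2 t') (n t') :=
  .rfl

variable {γ : Fin 3 → K} {n : Fin 3 → ℕ}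

lemma mem_thetaSystem_iff_of_odd_even_even (h0 : Odd (n 0)) (h1 : Even (n 1)) (h2 : Even (n 2))
    {x : K × (Fin 3 → K)} :
    x ∈ thetaSystem γ n ↔ x.2 0 + x.2 1 + x.2 2 = 0 ∧
      γ 0 * x.1 + γ 1 * x.2 1 + γ 2 * x.2 2 = 0 ∧
      γ 0 * x.2 0 = γ 1 * x.1 ∧ γ 1 * x.1 = γ 2 * x.1 := by
  simp only [mem_thetaSystem, Fin.sum_univ_three, Fin.forall_fin_succ, Fin.succ_zero_eq_one,
    Fin.succ_one_eq_two, IsEmpty.forall_iff, alternating_of_odd _ _ h0,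
    alternating_of_even _ _ h0.add_one, alternating_of_even _ _ h1,
    alternating_of_odd _ _ h1.add_one, alternating_of_even _ _ h2,
    alternating_of_odd _ _ h2.add_one]
  grind

lemma thetaSystem_eq_bot (h0 : Odd (n 0)) (h1 : Even (n 1)) (h2 : Even (n 2)) (hγ : γ 0 ≠ 0)
    (h12 : γ 1 ≠ γ 2) : thetaSystem γ n = ⊥ := by
  refine (Submodule.eq_bot_iff _).2 fun x hx => ?_
  obtain ⟨e1, e2, e3, e4⟩ := (mem_thetaSystem_iff_of_odd_even_even h0 h1 h2).1 hx
  have hA : x.1 = 0 := (mul_eq_mul_right_iff.1 e4).resolve_left h12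
  have hs0 : x.2 0 = 0 := by simpa [hA, hγ] using e3
  have hs1 : x.2 1 = 0 := by
    refine (mul_eq_zero.1 ?_).resolve_left (sub_ne_zero.2 h12)
    linear_combination e2 - γ 0 * hA - γ 2 * e1 + γ 2 * hs0
  have hs2 : x.2 2 = 0 := by linear_combination e1 - hs0 - hs1
  exact Prod.ext hA (funext fun t => by fin_cases t <;> assumption)

lemma finrank_thetaSystem_eq_one_iff (h0 : Odd (n 0)) (h1 : Even (n 1)) (h2 : Even (n 2))
    (hγ : ∀ t, γ t ≠ 0) :
    Module.finrank K (thetaSystem γ n) = 1 ↔ γ 1 = γ 2 ∧ γ 0 ^ 2 ≠ γ 1 ^ 2 := by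
  have hmem {x : K × (Fin 3 → K)} := mem_thetaSystem_iff_of_odd_even_even (γ := γ) h0 h1 h2 (x := x)
  by_cases h12 : γ 1 = γ 2
  · let v : thetaSystem γ n := ⟨(0, ![0, 1, -1]), hmem.2 (by simp [h12])⟩
    have hv : v ≠ 0 := fun h => one_ne_zero (congrFun (congrArg (·.1.2) h) 1)
    rw [finrank_eq_one_iff_of_nonzero' v hv, and_iff_right h12]
    constructor
    · intro hspan hsq
      have hsol : (1, ![γ 1 / γ 0, -(γ 1 / γ 0), 0]) ∈ thetaSystem γ n := by
        refine hmem.2 ⟨by simp, ?_, by simp [mul_div_cancel₀, hγ 0], by simp [h12]⟩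
        suffices γ 0 + -(γ 1 * (γ 1 / γ 0)) = 0 by simpa
        field_simp [hγ 0]
        linear_combination hsq
      obtain ⟨c, hc⟩ := hspan ⟨_, hsol⟩
      simpa [v] using congrArg (·.1.1) hc
    · rintro hsq ⟨x, hx⟩
      obtain ⟨e1, e2, e3, -⟩ := hmem.1 hx
      have hA : x.1 = 0 := by
        refine (mul_eq_zero.1 ?_).resolve_left (sub_ne_zero.2 hsq)
        linear_combination γ 0 * e2 + γ 1 * e3 - γ 0 * γ 1 * e1 + γ 0 * x.2 2 * h12
      have hs0 : x.2 0 = 0 := by simpa [hA, hγ 0] using e3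
      refine ⟨x.2 1, Subtype.ext (Prod.ext (by simp [v, hA]) (funext fun t => ?_))⟩
      have hs2 : -x.2 1 = x.2 2 := by linear_combination -e1 + hs0
      fin_cases t <;> simp [v, hs0, hs2]
  · rw [thetaSystem_eq_bot h0 h1 h2 (hγ 0) h12, finrank_bot]
    simp [h12]

end thetaSystem

section gauge

variable (M : MixedGraph V) {a b : V}

/-- The unit by which the value of a vector at the `i`-th vertex of the walk `w` is divided. It is
chosen so that along `w` the matrix `H` acts as it would on a directed path, every arc of which
carries the entry `I` forwards and `-I` backwards. -/
noncomputable def gauge (w : M.graph.Walk a b) (i : ℕ) : ℂ :=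
  Complex.I ^ ∑ j ∈ Finset.range i, (1 - sgnArc M (w.getVert j) (w.getVert (j + 1)))

/-- The value of the vector `f` at the `i`-th vertex of the walk `w`, divided by the gauge. -/
noncomputable def gauged (w : M.graph.Walk a b) (i : ℕ) (f : V → ℂ) : ℂ :=
  (gauge M w i)⁻¹ * f (w.getVert i)

variable {M} {w : M.graph.Walk a b} {i : ℕ} {f : V → ℂ}

lemma gauge_ne_zero : gauge M w i ≠ 0 :=
  zpow_ne_zero _ Complex.I_ne_zero

lemma gauge_zero : gauge M w 0 = 1 := by
  simp [gauge]

lemma gauge_succ : gauge M w (i + 1) =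
    gauge M w i * Complex.I ^ (1 - sgnArc M (w.getVert i) (w.getVert (i + 1))) := by
  rw [gauge, Finset.sum_range_succ, zpow_add₀ Complex.I_ne_zero, gauge]

lemma gauge_length : gauge M w w.length = Complex.I ^ ((w.length : ℤ) - walkSum (sgnArc M) w) := by
  rw [gauge, walkSum_eq_sum_getVert, Finset.sum_sub_distrib, Finset.sum_const, Finset.card_range,
    nsmul_one]

lemma gauge_mul_gauged : gauge M w i * gauged M w i f = f (w.getVert i) :=
  mul_inv_cancel_left₀ gauge_ne_zero _

lemma gauged_zero : gauged M w 0 f = f a := by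
  simp [gauged, gauge_zero]

end gauge

section hermitian

variable [Fintype V] [DecidableEq V] {M : MixedGraph V} {u v a b : V}

lemma hMatrix_apply_of_adj (h : M.graph.Adj u v) : M.hMatrix u v = Complex.I ^ sgnArc M u v := by
  unfold MixedGraph.hMatrix sgnArc
  by_cases huv : M.arc u v
  · simp [huv, M.arc_antisymm u v huv]
  · by_cases hvu : M.arc v u <;> simp [huv, hvu, h]

lemma hMatrix_apply_of_not_adj (h : ¬M.graph.Adj u v) : M.hMatrix u v = 0 := by
  have huv : ¬M.arc u v := fun harc => h (M.arc_adj u v harc)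
  have hvu : ¬M.arc v u := fun harc => h (M.arc_adj v u harc).symm
  simp [MixedGraph.hMatrix, huv, hvu, h]

lemma mulVec_hMatrix_apply {S : Finset V} (hS : M.graph.neighborSet u = S) (f : V → ℂ) :
    M.hMatrix.mulVec f u = ∑ w ∈ S, M.hMatrix u w * f w := by
  refine (Finset.sum_subset S.subset_univ fun w _ hw => ?_).symm
  have hnadj : ¬M.graph.Adj u w := by
    rwa [← SimpleGraph.mem_neighborSet, hS, Finset.mem_coe]
  simp only [hMatrix_apply_of_not_adj hnadj, zero_mul]

variable {w : M.graph.Walk a b} {i : ℕ} {f : V → ℂ}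

lemma hMatrix_getVert_succ_mul (hi : i < w.length) :
    M.hMatrix (w.getVert i) (w.getVert (i + 1)) * f (w.getVert (i + 1)) =
      Complex.I * gauge M w i * gauged M w (i + 1) f := by
  rw [← gauge_mul_gauged (f := f), gauge_succ, hMatrix_apply_of_adj (w.adj_getVert_succ hi),
    zpow_sub₀ Complex.I_ne_zero, zpow_one]
  field_simp

lemma hMatrix_succ_getVert_mul (hi : i < w.length) :
    M.hMatrix (w.getVert (i + 1)) (w.getVert i) * f (w.getVert i) =
      -Complex.I * gauge M w (i + 1) * gauged M w i f := by
  rw [← gauge_mul_gauged (f := f), gauge_succ, hMatrix_apply_of_adj (w.adj_getVert_succ hi).symm,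
    sgnArc_swap, zpow_neg, zpow_sub₀ Complex.I_ne_zero, zpow_one]
  field_simp
  linear_combination gauge M w i * gauged M w i f * Complex.I_sq

variable {ι : Type*} {W : ι → M.graph.Walk a b}

namespace IsThetaSystem

lemma mulVec_hMatrix_getVert (hW : IsThetaSystem W) {t : ι} (hi : i + 1 < (W t).length) :
    M.hMatrix.mulVec f ((W t).getVert (i + 1)) =
      Complex.I * gauge M (W t) (i + 1) * (gauged M (W t) (i + 2) f - gauged M (W t) i f) := by
  have hne : (W t).getVert i ≠ (W t).getVert (i + 2) := fun h => by
    have := (hW.isPath t).getVert_injOn (show i ≤ _ by omega) (show i + 2 ≤ _ by omega) h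
    omega
  have hS : M.graph.neighborSet ((W t).getVert (i + 1)) =
      (({(W t).getVert i, (W t).getVert (i + 2)} : Finset V) : Set V) := by
    rw [hW.neighborSet_getVert hi, Finset.coe_pair]
  rw [mulVec_hMatrix_apply hS, Finset.sum_pair hne, hMatrix_getVert_succ_mul hi,
    hMatrix_succ_getVert_mul (i.lt_succ_self.trans hi)]
  ring

lemma gauged_add_two (hW : IsThetaSystem W) (hf : M.hMatrix.mulVec f = 0) {t : ι}
    (hi : i + 2 ≤ (W t).length) : gauged M (W t) (i + 2) f = gauged M (W t) i f := by
  have hrow := congrFun hf ((W t).getVert (i + 1))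
  rw [hW.mulVec_hMatrix_getVert hi, Pi.zero_apply] at hrow
  simpa [Complex.I_ne_zero, gauge_ne_zero, sub_eq_zero] using hrow

lemma gauged_eq_alternating (hW : IsThetaSystem W) (hf : M.hMatrix.mulVec f = 0) (t : ι) :
    ∀ i ≤ (W t).length, gauged M (W t) i f = alternating (f a) (gauged M (W t) 1 f) i := by
  simpa only [gauged_zero] using
    eq_alternating (k := fun i => gauged M (W t) i f) fun _ => hW.gauged_add_two hf

section

variable [Fintype ι]

lemma mulVec_hMatrix_start (hW : IsThetaSystem W) :
    M.hMatrix.mulVec f a = Complex.I * ∑ t, gauged M (W t) 1 f := by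
  have hS : M.graph.neighborSet a = (Finset.univ.image fun t => (W t).snd : Finset V) := by
    rw [hW.neighborSet_start, Finset.coe_image, Finset.coe_univ, Set.image_univ]
  rw [mulVec_hMatrix_apply hS, Finset.sum_image hW.snd_injective.injOn, Finset.mul_sum]
  refine Finset.sum_congr rfl fun t _ => ?_
  simpa [gauge_zero] using hMatrix_getVert_succ_mul (f := f) (hW.length_pos t)

lemma mulVec_hMatrix_end (hW : IsThetaSystem W) :
    M.hMatrix.mulVec f b =
      -Complex.I * ∑ t, gauge M (W t) (W t).length * gauged M (W t) ((W t).length - 1) f := by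
  have hS : M.graph.neighborSet b = (Finset.univ.image fun t => (W t).reverse.snd : Finset V) := by
    rw [hW.reverse.neighborSet_start, Finset.coe_image, Finset.coe_univ, Set.image_univ]
  rw [mulVec_hMatrix_apply hS, Finset.sum_image hW.reverse.snd_injective.injOn, Finset.mul_sum]
  refine Finset.sum_congr rfl fun t _ => ?_
  have hlen : (W t).length - 1 + 1 = (W t).length := Nat.sub_add_cancel (hW.length_pos t)
  have hrow := hMatrix_succ_getVert_mul (f := f) (Nat.sub_one_lt_of_lt (hW.length_pos t))
  rw [hlen, SimpleGraph.Walk.getVert_length] at hrow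
  rw [SimpleGraph.Walk.snd_reverse, ← mul_assoc]
  exact hrow

lemma mulVec_hMatrix_eq_zero_iff (hW : IsThetaSystem W) :
    M.hMatrix.mulVec f = 0 ↔
      (∀ t i, i + 2 ≤ (W t).length → gauged M (W t) (i + 2) f = gauged M (W t) i f) ∧
      ∑ t, gauged M (W t) 1 f = 0 ∧
      ∑ t, gauge M (W t) (W t).length * gauged M (W t) ((W t).length - 1) f = 0 := by
  have hI := Complex.I_ne_zero
  constructor
  · intro h
    refine ⟨fun t i hi => hW.gauged_add_two h hi, ?_, ?_⟩
    · simpa [hI, hW.mulVec_hMatrix_start] using congrFun h a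
    · simpa [hI, hW.mulVec_hMatrix_end] using congrFun h b
  · rintro ⟨hstep, hstart, hend⟩
    funext v
    obtain ⟨t, ht⟩ := hW.exists_mem_support v
    obtain ⟨i, rfl, hi⟩ := SimpleGraph.Walk.mem_support_iff_exists_getVert.1 ht
    rcases hi.eq_or_lt with rfl | hi
    · rw [SimpleGraph.Walk.getVert_length, hW.mulVec_hMatrix_end, hend, mul_zero, Pi.zero_apply]
    · cases i with
      | zero =>
        rw [SimpleGraph.Walk.getVert_zero, hW.mulVec_hMatrix_start, hstart, mul_zero,
          Pi.zero_apply]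
      | succ i =>
        rw [hW.mulVec_hMatrix_getVert hi, hstep t i hi, sub_self, mul_zero, Pi.zero_apply]

end

end IsThetaSystem

/-- The coordinates of a vector used to solve for the kernel: its value at the common start of the
walks `W t`, and its gauged values at the vertices following it. -/
noncomputable def startData (W : ι → M.graph.Walk a b) : (V → ℂ) →ₗ[ℂ] ℂ × (ι → ℂ) where
  toFun f := (f a, fun t => gauged M (W t) 1 f)
  map_add' f g := Prod.ext rfl (funext fun _ => by simp [gauged, mul_add])
  map_smul' c f := Prod.ext rfl (funext fun _ => by simp [gauged, mul_left_comm])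

namespace IsThetaSystem

lemma startData_injOn_ker (hW : IsThetaSystem W) :
    Set.InjOn (startData W) (LinearMap.ker M.hMatrix.mulVecLin) := by
  intro f hf g hg h
  obtain ⟨ha, hs⟩ := Prod.ext_iff.1 h
  funext v
  obtain ⟨t, ht⟩ := hW.exists_mem_support v
  obtain ⟨i, rfl, hi⟩ := SimpleGraph.Walk.mem_support_iff_exists_getVert.1 ht
  rw [← gauge_mul_gauged (w := W t) (f := f), ← gauge_mul_gauged (w := W t) (f := g),
    hW.gauged_eq_alternating hf t i hi, hW.gauged_eq_alternating hg t i hi]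
  exact congrArg _ (congrArg₂ (alternating · · i) ha (congrFun hs t))

variable [Fintype ι]

lemma map_startData_ker (hW : IsThetaSystem W) :
    (LinearMap.ker M.hMatrix.mulVecLin).map (startData W) =
      thetaSystem (fun t => gauge M (W t) (W t).length) fun t => (W t).length := by
  ext ⟨A, s⟩
  rw [Submodule.mem_map, mem_thetaSystem]
  constructor
  · rintro ⟨f, hf, ⟨⟩⟩
    have halt := hW.gauged_eq_alternating hf
    obtain ⟨-, hstart, hend⟩ := hW.mulVec_hMatrix_eq_zero_iff.1 hf
    refine ⟨hstart, ?_, fun t t' => ?_⟩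
    · simpa only [halt _ _ (Nat.sub_le _ _), alternating_sub_one _ _ (hW.length_pos _)] using hend
    · dsimp only
      rw [← halt t _ le_rfl, ← halt t' _ le_rfl, gauge_mul_gauged, gauge_mul_gauged,
        SimpleGraph.Walk.getVert_length, SimpleGraph.Walk.getVert_length]
  · rintro ⟨hstart, hend, hagree⟩
    obtain ⟨f, hf⟩ := hW.exists_forall_getVert_eq
      (fun t i => gauge M (W t) i * alternating A (s t) i)
      (fun t t' => by simp [gauge_zero, alternating_of_even]) hagree
    have halt (t : ι) {i : ℕ} (hi : i ≤ (W t).length) :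
        gauged M (W t) i f = alternating A (s t) i := by
      rw [gauged, hf t i hi, inv_mul_cancel_left₀ gauge_ne_zero]
    have hsnd (t : ι) : gauged M (W t) 1 f = s t :=
      (halt t (hW.length_pos t)).trans (alternating_of_odd _ _ odd_one)
    refine ⟨f, hW.mulVec_hMatrix_eq_zero_iff.2 ⟨fun t i hi => ?_, ?_, ?_⟩,
      Prod.ext ?_ (funext hsnd)⟩
    · rw [halt t hi, halt t (by omega), alternating_add_two]
    · simpa only [hsnd] using hstart
    · simpa only [halt _ (Nat.sub_le _ _), alternating_sub_one _ _ (hW.length_pos _)] using hend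
    · obtain ⟨t, -⟩ := hW.exists_mem_support a
      have h0 := halt t (Nat.zero_le _)
      rwa [gauged_zero, alternating_of_even _ _ Even.zero] at h0

lemma finrank_ker_hMatrix (hW : IsThetaSystem W) :
    Module.finrank ℂ (LinearMap.ker M.hMatrix.mulVecLin) = Module.finrank ℂ
      (thetaSystem (fun t => gauge M (W t) (W t).length) fun t => (W t).length) := by
  rw [← hW.map_startData_ker, ← LinearMap.range_domRestrict,
    LinearMap.finrank_range_of_inj (Set.injOn_iff_injective.1 hW.startData_injOn_ker)]

end IsThetaSystem

end hermitian

lemma hRank_add_finrank_ker [Fintype V] [DecidableEq V] (M : MixedGraph V) :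
    M.hRank + Module.finrank ℂ (LinearMap.ker M.hMatrix.mulVecLin) = Fintype.card V := by
  rw [← Module.finrank_fintype_fun_eq_card ℂ]
  exact M.hMatrix.mulVecLin.finrank_range_add_finrank_ker

lemma I_zpow_eq_I_zpow_iff {j k : ℤ} : Complex.I ^ j = Complex.I ^ k ↔ 4 ∣ j - k := by
  rw [← div_eq_one_iff_eq (zpow_ne_zero k Complex.I_ne_zero), ← zpow_sub₀ Complex.I_ne_zero]
  exact Complex.isPrimitiveRoot_I.zpow_eq_one_iff_dvd _

section oddEvenEven

variable {a b : V} {M : MixedGraph V} {W : Fin 3 → M.graph.Walk a b}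

namespace IsThetaSystem

lemma oddCyclesSig_even_iff (hW : IsThetaSystem W) (h0 : Odd (W 0).length)
    (h1 : Even (W 1).length) (h2 : Even (W 2).length) :
    OddCyclesSig M Even ↔
      Even (walkSum (sgnArc M) (W 0) - walkSum (sgnArc M) (W 1)) ∧
      Even (walkSum (sgnArc M) (W 0) - walkSum (sgnArc M) (W 2)) := by
  rw [hW.oddCyclesSig_iff]
  simp only [Int.natAbs_even]
  constructor
  · intro h
    exact ⟨h 0 1 (by decide) (h0.add_even h1), h 0 2 (by decide) (h0.add_even h2)⟩
  · rintro ⟨h01, h02⟩ t t' hne hodd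
    fin_cases t <;> fin_cases t' <;> grind

lemma evenCyclesSig_iff_of_odd_even_even (hW : IsThetaSystem W) (h0 : Odd (W 0).length)
    (h1 : Even (W 1).length) (h2 : Even (W 2).length) {P : ℕ → ℕ → Prop} :
    EvenCyclesSig M P ↔ P ((W 1).length + (W 2).length)
      (walkSum (sgnArc M) (W 1) - walkSum (sgnArc M) (W 2)).natAbs := by
  rw [hW.evenCyclesSig_iff]
  constructor
  · exact fun h => h 1 2 (by decide) (h1.add h2)
  · rintro h t t' hne heven
    fin_cases t <;> fin_cases t' <;> grind

variable [Fintype V] [DecidableEq V]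

lemma finrank_ker_hMatrix_eq_one_iff (hW : IsThetaSystem W) (h0 : Odd (W 0).length)
    (h1 : Even (W 1).length) (h2 : Even (W 2).length) :
    Module.finrank ℂ (LinearMap.ker M.hMatrix.mulVecLin) = 1 ↔
      OddCyclesSig M Even ∧
        EvenCyclesSig M (fun n s => (n + s) % 4 = 0) := by
  rw [hW.finrank_ker_hMatrix, finrank_thetaSystem_eq_one_iff h0 h1 h2 fun t => gauge_ne_zero,
    hW.oddCyclesSig_even_iff h0 h1 h2, hW.evenCyclesSig_iff_of_odd_even_even h0 h1 h2]
  simp only [gauge_length, ← zpow_natCast, ← zpow_mul, ne_eq, I_zpow_eq_I_zpow_iff]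
  obtain ⟨k, hk⟩ := h0
  obtain ⟨l, hl⟩ := h1
  obtain ⟨m, hm⟩ := h2
  simp only [hk, hl, hm, Int.even_iff]
  push_cast
  omega

end IsThetaSystem

end oddEvenEven

/-- Let G̃ be a mixed bicyclic graph with underlying graph
θ(p,l,q), p even, l and q odd. Then r(G̃) = 2m(G) − 2κ(G) + 1 iff the two odd cycles
of G̃ have even signatures and the even cycle C̃_{q+l−2} satisfies
q + l + σ(C̃_{q+l−2}) ≡ 2 (mod 4). -/
theorem theta_hRank_eq_lower_bound_add_one_iff
    {V : Type u} [Fintype V] [DecidableEq V] (M : MixedGraph V) (p l q : ℕ)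
    (hp : Even p) (hl : Odd l) (hq : Odd q) (hG : IsThetaGraph M.graph p l q) :
    (M.hRank : ℤ) =
        2 * (matchingNumber M.graph : ℤ) - 2 * (evenCycleCount M.graph : ℤ) + 1 ↔
      (OddCyclesSig M Even ∧ EvenCyclesSig M (fun _ s => (q + l + s) % 4 = 2)) := by
  obtain ⟨a, b, W, hW, rfl, rfl, rfl⟩ := hG.exists_isThetaSystem
  have h0 : Odd (W 0).length := by grind
  have h1 : Even (W 1).length := by grind
  have h2 : Even (W 2).length := by grind
  have hmatching := hW.two_mul_matchingNumber ((h0.add_even h1).add_even h2)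
  have hcount := hW.evenCycleCount_eq_one h0 h1 h2
  have hnullity := hRank_add_finrank_ker M
  have hsig : EvenCyclesSig M (fun n s => (n + s) % 4 = 0) ↔
      EvenCyclesSig M (fun _ s => ((W 2).length + 1 + ((W 1).length + 1) + s) % 4 = 2) := by
    rw [hW.evenCyclesSig_iff_of_odd_even_even h0 h1 h2,
      hW.evenCyclesSig_iff_of_odd_even_even h0 h1 h2]
    omega
  rw [← hsig, ← hW.finrank_ker_hMatrix_eq_one_iff h0 h1 h2]
  omega

end MixedPaper
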